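/- The covariance of the stationary fractional Ornstein–Uhlenbeck process admits the spectral representation: σ_ou²·(1/Γ(2H+1))·[(1/2)∫_ℝ e^{−|v|}|as+v|^{2H} dv − |as|^{2H}] = σ_ou²·(2 sin(πH)/π)·∫₀^∞ cos(asx)·x^{1−2H}/(1+x²) dx, for all s ∈ ℝ. -/

import Mathlib

open Real MeasureTheory

/-!
For `0 < p < 2`, rescaling gives `K_p |u|^p = ∫₀^∞ (1 - cos (u x)) x^(-1-p) dx` with
`K_p = ∫₀^∞ (1 - cos x) x^(-1-p) dx`, so by Tonelli absolute moments can be read off from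
characteristic functions. With `p = 2H`, apply this to `c + V`, where `V` has the Laplace density
`e^{-|v|} / 2` and characteristic function `1 / (1 + x²)`: the bracket on the left-hand side is
`E|c + V|^p - |c|^p`, and `K_p` times it is
`∫₀^∞ cos (c x) (1 - 1 / (1 + x²)) x^(-1-p) dx = ∫₀^∞ cos (c x) x^(1-p) / (1 + x²) dx`.
Taking `c = 0`, where both sides are classical, evaluates `K_p`.
-/

section Tonelli

variable {α β : Type*} [MeasurableSpace α] [MeasurableSpace β] {μ : Measure α} {ν : Measure β}
  [SFinite ν]

theorem integrable_uncurry_of_nonneg {f : α → β → ℝ}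
    (hf : AEStronglyMeasurable (Function.uncurry f) (μ.prod ν))
    (hf_nonneg : ∀ᵐ a ∂μ, 0 ≤ᵐ[ν] f a) (hf_section : ∀ᵐ a ∂μ, Integrable (f a) ν)
    (hf_integral : Integrable (fun a => ∫ b, f a b ∂ν) μ) :
    Integrable (Function.uncurry f) (μ.prod ν) := by
  refine (integrable_prod_iff hf).2 ⟨hf_section, hf_integral.congr ?_⟩
  filter_upwards [hf_nonneg] with a ha
  refine integral_congr_ae ?_
  filter_upwards [ha] with b hb
  exact (norm_of_nonneg hb).symm

end Tonelli

section Reflection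

variable {q r : ℝ}

theorem integral_exp_neg_mul_rpow_mul_exp_neg_mul_rpow (hr : 0 < r) (hq : -1 < q) {y : ℝ}
    (hy : 0 < y) :
    ∫ x in Set.Ioi (0 : ℝ), exp (-y) * (x ^ q * exp (-y * x ^ r))
      = 1 / r * Gamma ((q + 1) / r) * (exp (-y) * y ^ (1 - (q + 1) / r - 1)) := by
  rw [integral_const_mul, integral_rpow_mul_exp_neg_mul_rpow hr hq hy, sub_right_comm, sub_self,
    zero_sub, neg_div]
  ring

theorem integral_exp_neg_mul_mul_exp_neg_mul_Ioi (b : ℝ) {t : ℝ} (ht : -1 < t) :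
    ∫ y in Set.Ioi (0 : ℝ), exp (-y) * (b * exp (-y * t)) = b / (1 + t) := by
  have exp_integral : ∫ y in Set.Ioi (0 : ℝ), exp (-(1 + t) * y) = 1 / (1 + t) := by
    rw [integral_exp_mul_Ioi (by linarith), mul_zero, exp_zero, neg_div_neg_eq]
  rw [div_eq_mul_one_div, ← exp_integral, ← integral_const_mul]
  refine integral_congr_ae (.of_forall fun y => ?_)
  simp only
  rw [mul_left_comm, ← exp_add]
  ring_nf

theorem integrable_exp_neg_mul_rpow_mul_exp_neg_mul_rpow (hq : -1 < q) (hqr : q < r - 1) :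
    Integrable (Function.uncurry fun y x : ℝ => exp (-y) * (x ^ q * exp (-y * x ^ r)))
      ((volume.restrict (Set.Ioi 0)).prod (volume.restrict (Set.Ioi 0))) := by
  have hr : 0 < r := by linarith
  have hz : 0 < 1 - (q + 1) / r := by rw [sub_pos, div_lt_one hr]; linarith
  refine integrable_uncurry_of_nonneg (by fun_prop) (.of_forall fun y => ?_) ?_ ?_
  · filter_upwards [ae_restrict_mem measurableSet_Ioi] with x (hx : 0 < x)
    simp only [Pi.zero_apply]
    positivity
  · filter_upwards [ae_restrict_mem measurableSet_Ioi] with y hy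
    exact (integrableOn_rpow_mul_exp_neg_mul_rpow hq hr hy).const_mul _
  · refine ((GammaIntegral_convergent hz).const_mul (1 / r * Gamma ((q + 1) / r))).congr ?_
    filter_upwards [ae_restrict_mem measurableSet_Ioi] with y hy
    exact (integral_exp_neg_mul_rpow_mul_exp_neg_mul_rpow hr hq hy).symm

theorem integral_rpow_div_one_add_rpow (hq : -1 < q) (hqr : q < r - 1) :
    ∫ x in Set.Ioi (0 : ℝ), x ^ q / (1 + x ^ r) = π / (r * sin (π * ((q + 1) / r))) := by
  have hr : 0 < r := by linarith
  have hz : 0 < 1 - (q + 1) / r := by rw [sub_pos, div_lt_one hr]; linarith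
  calc ∫ x in Set.Ioi (0 : ℝ), x ^ q / (1 + x ^ r)
    _ = ∫ x in Set.Ioi (0 : ℝ), ∫ y in Set.Ioi (0 : ℝ), exp (-y) * (x ^ q * exp (-y * x ^ r)) := by
      refine setIntegral_congr_fun measurableSet_Ioi fun x (hx : 0 < x) => ?_
      exact (integral_exp_neg_mul_mul_exp_neg_mul_Ioi _
        (neg_one_lt_zero.trans (rpow_pos_of_pos hx r))).symm
    _ = ∫ y in Set.Ioi (0 : ℝ), ∫ x in Set.Ioi (0 : ℝ), exp (-y) * (x ^ q * exp (-y * x ^ r)) :=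
      (integral_integral_swap (integrable_exp_neg_mul_rpow_mul_exp_neg_mul_rpow hq hqr)).symm
    _ = 1 / r * Gamma ((q + 1) / r) * Gamma (1 - (q + 1) / r) := by
      rw [setIntegral_congr_fun measurableSet_Ioi fun y hy =>
        integral_exp_neg_mul_rpow_mul_exp_neg_mul_rpow hr hq hy, integral_const_mul,
        ← Gamma_eq_integral hz]
    _ = π / (r * sin (π * ((q + 1) / r))) := by
      rw [mul_assoc, Gamma_mul_Gamma_one_sub, one_div_mul_eq_div, div_div, mul_comm r]

end Reflection

section OneSubCos

variable {p : ℝ}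

/-- The normalising constant `∫₀^∞ (1 - cos x) x^(-1-p) dx` of the representation of `|u| ^ p` as a
superposition of the functions `1 - cos (u x)`; the integral converges exactly for `0 < p < 2`. -/
noncomputable def oneSubCosIntegral (p : ℝ) : ℝ :=
  ∫ x in Set.Ioi (0 : ℝ), (1 - cos x) * x ^ (-1 - p)

theorem one_sub_cos_mul_rpow_nonneg (u : ℝ) {x : ℝ} (hx : 0 ≤ x) :
    0 ≤ (1 - cos (u * x)) * x ^ (-1 - p) :=
  mul_nonneg (sub_nonneg.2 (cos_le_one _)) (rpow_nonneg hx _)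

theorem integrableOn_Ioc_one_sub_cos_mul_rpow (hp2 : p < 2) :
    IntegrableOn (fun x : ℝ => (1 - cos x) * x ^ (-1 - p)) (Set.Ioc 0 1) := by
  have rpow_integrable : IntegrableOn (fun x : ℝ => x ^ (1 - p)) (Set.Ioc 0 1) :=
    (intervalIntegrable_iff_integrableOn_Ioc_of_le zero_le_one).1
      (intervalIntegral.intervalIntegrable_rpow' (by linarith))
  refine rpow_integrable.mono' (by fun_prop) ?_
  filter_upwards [ae_restrict_mem measurableSet_Ioc] with x hx
  have hx0 : 0 < x := hx.1
  have one_sub_cos_le : 1 - cos x ≤ x ^ 2 := by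
    linarith [one_sub_sq_div_two_le_cos (x := x), sq_nonneg x]
  rw [norm_of_nonneg (by simpa using one_sub_cos_mul_rpow_nonneg 1 hx0.le),
    show 1 - p = 2 + (-1 - p) by ring, rpow_add hx0, rpow_two]
  gcongr

theorem integrableOn_Ioi_one_one_sub_cos_mul_rpow (hp : 0 < p) :
    IntegrableOn (fun x : ℝ => (1 - cos x) * x ^ (-1 - p)) (Set.Ioi 1) := by
  have rpow_integrable : IntegrableOn (fun x : ℝ => 2 * x ^ (-1 - p)) (Set.Ioi 1) :=
    (integrableOn_Ioi_rpow_of_lt (by linarith) one_pos).const_mul 2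
  refine rpow_integrable.mono' (by fun_prop) ?_
  filter_upwards [ae_restrict_mem measurableSet_Ioi] with x hx
  have hx0 : 0 < x := one_pos.trans hx
  rw [norm_of_nonneg (by simpa using one_sub_cos_mul_rpow_nonneg 1 hx0.le)]
  gcongr
  linarith [neg_one_le_cos x]

theorem integrableOn_one_sub_cos_mul_rpow (hp : 0 < p) (hp2 : p < 2) :
    IntegrableOn (fun x : ℝ => (1 - cos x) * x ^ (-1 - p)) (Set.Ioi 0) := by
  rw [← Set.Ioc_union_Ioi_eq_Ioi zero_le_one, integrableOn_union]
  exact ⟨integrableOn_Ioc_one_sub_cos_mul_rpow hp2, integrableOn_Ioi_one_one_sub_cos_mul_rpow hp⟩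

theorem one_sub_cos_mul_rpow_eq_rescaled (p : ℝ) {u x : ℝ} (hu : u ≠ 0) (hx : 0 < x) :
    (1 - cos (u * x)) * x ^ (-1 - p)
      = |u| ^ (1 + p) * ((1 - cos (|u| * x)) * (|u| * x) ^ (-1 - p)) := by
  have hu' : 0 < |u| := abs_pos.2 hu
  have rpow_cancel : |u| ^ (1 + p) * |u| ^ (-1 - p) = 1 := by
    rw [← rpow_add hu', show 1 + p + (-1 - p) = 0 by ring, rpow_zero]
  rw [mul_rpow hu'.le hx.le, ← cos_abs (u * x), abs_mul, abs_of_pos hx]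
  linear_combination (-(1 - cos (|u| * x)) * x ^ (-1 - p)) * rpow_cancel

theorem integrableOn_one_sub_cos_mul_mul_rpow (hp : 0 < p) (hp2 : p < 2) (u : ℝ) :
    IntegrableOn (fun x : ℝ => (1 - cos (u * x)) * x ^ (-1 - p)) (Set.Ioi 0) := by
  rcases eq_or_ne u 0 with rfl | hu
  · simp
  rw [integrableOn_congr_fun (fun x (hx : x ∈ Set.Ioi 0) =>
    one_sub_cos_mul_rpow_eq_rescaled p hu hx) measurableSet_Ioi]
  refine Integrable.const_mul ?_ _
  refine (integrableOn_Ioi_comp_mul_left_iff (fun x : ℝ => (1 - cos x) * x ^ (-1 - p)) 0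
    (abs_pos.2 hu)).2 ?_
  rw [mul_zero]
  exact integrableOn_one_sub_cos_mul_rpow hp hp2

theorem integral_one_sub_cos_mul_mul_rpow (hp : p ≠ 0) (u : ℝ) :
    ∫ x in Set.Ioi (0 : ℝ), (1 - cos (u * x)) * x ^ (-1 - p) = oneSubCosIntegral p * |u| ^ p := by
  rcases eq_or_ne u 0 with rfl | hu
  · simp [zero_rpow hp]
  have hu' : 0 < |u| := abs_pos.2 hu
  rw [setIntegral_congr_fun measurableSet_Ioi
      (fun x hx => one_sub_cos_mul_rpow_eq_rescaled p hu hx), integral_const_mul,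
    integral_comp_mul_left_Ioi (fun x : ℝ => (1 - cos x) * x ^ (-1 - p)) 0 hu', mul_zero,
    rpow_add hu', rpow_one, smul_eq_mul, oneSubCosIntegral]
  field_simp

end OneSubCos

section AbsoluteMoments

variable {Ω : Type*} [MeasurableSpace Ω] {μ : Measure Ω} {X : Ω → ℝ} {p : ℝ}

theorem integrable_prod_one_sub_cos_mul_rpow (hp : 0 < p) (hp2 : p < 2) (hX : AEMeasurable X μ)
    (hXp : Integrable (fun ω => |X ω| ^ p) μ) :
    Integrable (Function.uncurry fun ω x => (1 - cos (X ω * x)) * x ^ (-1 - p))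
      (μ.prod (volume.restrict (Set.Ioi 0))) := by
  refine integrable_uncurry_of_nonneg ?_ (.of_forall fun ω => ?_) (.of_forall fun ω => ?_) ?_
  · simp only [Function.uncurry_def]
    fun_prop
  · filter_upwards [ae_restrict_mem measurableSet_Ioi] with x hx
    exact one_sub_cos_mul_rpow_nonneg _ (le_of_lt hx)
  · exact integrableOn_one_sub_cos_mul_mul_rpow hp hp2 _
  · simp only [integral_one_sub_cos_mul_mul_rpow hp.ne']
    exact hXp.const_mul _

theorem integrableOn_integral_one_sub_cos_mul_rpow [SFinite μ] (hp : 0 < p) (hp2 : p < 2)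
    (hX : AEMeasurable X μ) (hXp : Integrable (fun ω => |X ω| ^ p) μ) :
    IntegrableOn (fun x => (∫ ω, 1 - cos (X ω * x) ∂μ) * x ^ (-1 - p)) (Set.Ioi 0) := by
  simp only [← integral_mul_const]
  exact (integrable_prod_one_sub_cos_mul_rpow hp hp2 hX hXp).integral_prod_right

theorem oneSubCosIntegral_mul_integral_abs_rpow [SFinite μ] (hp : 0 < p) (hp2 : p < 2)
    (hX : AEMeasurable X μ) (hXp : Integrable (fun ω => |X ω| ^ p) μ) :
    oneSubCosIntegral p * ∫ ω, |X ω| ^ p ∂μ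
      = ∫ x in Set.Ioi (0 : ℝ), (∫ ω, 1 - cos (X ω * x) ∂μ) * x ^ (-1 - p) := by
  simp only [← integral_const_mul, ← integral_one_sub_cos_mul_mul_rpow hp.ne',
    ← integral_mul_const]
  exact integral_integral_swap (integrable_prod_one_sub_cos_mul_rpow hp hp2 hX hXp)

theorem integrable_cos_mul [IsFiniteMeasure μ] (hX : AEMeasurable X μ) (x : ℝ) :
    Integrable (fun ω => cos (X ω * x)) μ :=
  .of_bound (by fun_prop) 1 (.of_forall fun _ => abs_cos_le_one _)

theorem integral_cos_const_add_mul_eq_re (ν : Measure ℝ) [IsFiniteMeasure ν] (c x : ℝ) :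
    ∫ v, cos ((c + v) * x) ∂ν = (Complex.exp (c * x * Complex.I) * charFun ν x).re := by
  have exp_integrable : Integrable
      (fun v : ℝ => Complex.exp (c * x * Complex.I) * Complex.exp (x * v * Complex.I)) ν :=
    .of_bound (by fun_prop) 1 (.of_forall fun v => by simp [Complex.norm_exp])
  rw [charFun_apply_real, ← integral_const_mul, ← RCLike.re_to_complex,
    ← integral_re exp_integrable]
  refine integral_congr_ae (.of_forall fun v => ?_)
  simp only [RCLike.re_to_complex]
  rw [← Complex.exp_add, ← Complex.exp_ofReal_mul_I_re]
  push_cast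
  ring_nf

theorem oneSubCosIntegral_mul_integral_abs_rpow_sub [IsProbabilityMeasure μ] (hp : 0 < p)
    (hp2 : p < 2) (hX : AEMeasurable X μ) (hXp : Integrable (fun ω => |X ω| ^ p) μ) (c : ℝ) :
    oneSubCosIntegral p * (∫ ω, |X ω| ^ p ∂μ - |c| ^ p)
      = ∫ x in Set.Ioi (0 : ℝ), (cos (c * x) - ∫ ω, cos (X ω * x) ∂μ) * x ^ (-1 - p) := by
  rw [mul_sub, oneSubCosIntegral_mul_integral_abs_rpow hp hp2 hX hXp,
    ← integral_one_sub_cos_mul_mul_rpow hp.ne',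
    ← integral_sub (integrableOn_integral_one_sub_cos_mul_rpow hp hp2 hX hXp)
      (integrableOn_one_sub_cos_mul_mul_rpow hp hp2 c)]
  refine integral_congr_ae (.of_forall fun x => ?_)
  simp only
  rw [integral_sub (integrable_const _) (integrable_cos_mul hX x)]
  simp only [integral_const, probReal_univ, one_smul]
  ring

end AbsoluteMoments

section Laplace

/-- The standard Laplace (two-sided exponential) distribution on `ℝ`, with density `e^{-|v|} / 2`;
half the integral against `e^{-|v|}` in the covariance is an expectation under it. -/
noncomputable def laplaceMeasure : Measure ℝ :=
  volume.withDensity fun v => ENNReal.ofReal (exp (-|v|) / 2)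

namespace laplaceMeasure

theorem integral_eq {E : Type*} [NormedAddCommGroup E] [NormedSpace ℝ E] (f : ℝ → E) :
    ∫ v, f v ∂laplaceMeasure = ∫ v, (exp (-|v|) / 2) • f v := by
  rw [laplaceMeasure, integral_withDensity_eq_integral_toReal_smul (by fun_prop)
    (.of_forall fun _ => ENNReal.ofReal_lt_top)]
  simp only [ENNReal.toReal_ofReal (half_pos (exp_pos _)).le]

theorem half_mul_integral_exp_neg_abs_mul (f : ℝ → ℝ) :
    1 / 2 * ∫ v, exp (-|v|) * f v = ∫ v, f v ∂laplaceMeasure := by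
  rw [integral_eq, ← integral_const_mul]
  refine integral_congr_ae (.of_forall fun v => ?_)
  simp only [smul_eq_mul]
  ring

theorem integral_abs_rpow {q : ℝ} (hq : -1 < q) : ∫ v, |v| ^ q ∂laplaceMeasure = Gamma (q + 1) := by
  rw [integral_eq, integral_comp_abs (f := fun x => (exp (-x) / 2) • x ^ q),
    Gamma_eq_integral (by linarith), ← integral_const_mul]
  refine integral_congr_ae (.of_forall fun x => ?_)
  simp only [smul_eq_mul, add_sub_cancel_right]
  ring

theorem integrable_abs_rpow {q : ℝ} (hq : -1 < q) : Integrable (fun v => |v| ^ q) laplaceMeasure :=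
  .of_integral_ne_zero <| by
    rw [integral_abs_rpow hq]
    exact (Gamma_pos_of_pos (by linarith)).ne'

instance : IsProbabilityMeasure laplaceMeasure where
  measure_univ := by
    have real_univ : laplaceMeasure.real Set.univ = 1 := by
      simpa using integral_abs_rpow neg_one_lt_zero
    rw [← ENNReal.toReal_eq_one_iff]
    exact real_univ

theorem integrable_abs_const_add_rpow {p : ℝ} (hp : 0 < p) (c : ℝ) :
    Integrable (fun v => |c + v| ^ p) laplaceMeasure := by
  have memLp_id : MemLp id (ENNReal.ofReal p) laplaceMeasure := by
    rw [← integrable_norm_rpow_iff (by fun_prop) (by simpa) ENNReal.ofReal_ne_top,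
      ENNReal.toReal_ofReal hp.le]
    exact integrable_abs_rpow (by linarith)
  have memLp_add : MemLp (fun v => c + v) (ENNReal.ofReal p) laplaceMeasure :=
    (memLp_const c).add memLp_id
  simpa [ENNReal.toReal_ofReal hp.le] using
    memLp_add.integrable_norm_rpow (by simpa) ENNReal.ofReal_ne_top

theorem density_smul_exp_of_abs_eq {ε v : ℝ} (hv : |v| = -ε * v) (t : ℝ) :
    (exp (-|v|) / 2) • Complex.exp (t * v * Complex.I)
      = 1 / 2 * Complex.exp ((ε + t * Complex.I) * v) := by
  rw [hv, add_mul, Complex.exp_add, Complex.real_smul]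
  push_cast
  ring_nf

theorem charFun_eq (t : ℝ) : charFun laplaceMeasure t = 1 / (1 + t ^ 2) := by
  have eqOn_Iic : Set.EqOn (fun v : ℝ => (exp (-|v|) / 2) • Complex.exp (t * v * Complex.I))
      (fun v => 1 / 2 * Complex.exp (((1 : ℝ) + t * Complex.I) * v)) (Set.Iic 0) := fun v hv =>
    density_smul_exp_of_abs_eq (by rw [abs_of_nonpos (Set.mem_Iic.1 hv), neg_one_mul]) t
  have eqOn_Ioi : Set.EqOn (fun v : ℝ => (exp (-|v|) / 2) • Complex.exp (t * v * Complex.I))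
      (fun v => 1 / 2 * Complex.exp (((-1 : ℝ) + t * Complex.I) * v)) (Set.Ioi 0) := fun v hv =>
    density_smul_exp_of_abs_eq (by rw [abs_of_pos (Set.mem_Ioi.1 hv), neg_neg, one_mul]) t
  have re_pos : 0 < ((1 : ℝ) + t * Complex.I).re := by simp
  have re_neg : ((-1 : ℝ) + t * Complex.I).re < 0 := by simp
  rw [charFun_apply_real, integral_eq, ← intervalIntegral.integral_Iic_add_Ioi (b := 0)
      ((integrableOn_congr_fun eqOn_Iic measurableSet_Iic).2
        ((integrableOn_exp_mul_complex_Iic re_pos 0).const_mul _))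
      ((integrableOn_congr_fun eqOn_Ioi measurableSet_Ioi).2
        ((integrableOn_exp_mul_complex_Ioi re_neg 0).const_mul _)),
    setIntegral_congr_fun measurableSet_Iic eqOn_Iic,
    setIntegral_congr_fun measurableSet_Ioi eqOn_Ioi, integral_const_mul, integral_const_mul,
    integral_exp_mul_complex_Iic re_pos, integral_exp_mul_complex_Ioi re_neg]
  have pos_ne : (1 : ℝ) + t * Complex.I ≠ 0 := fun h => re_pos.ne' (by rw [h, Complex.zero_re])
  have neg_ne : (-1 : ℝ) + t * Complex.I ≠ 0 := fun h => re_neg.ne (by rw [h, Complex.zero_re])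
  have sq_ne : 1 + (t : ℂ) ^ 2 ≠ 0 := mod_cast (by positivity : 1 + t ^ 2 ≠ 0)
  push_cast at pos_ne neg_ne ⊢
  simp only [mul_zero, Complex.exp_zero]
  field_simp
  linear_combination (-2 * (t : ℂ) ^ 2) * Complex.I_sq

theorem integral_cos_const_add_mul (c x : ℝ) :
    ∫ v, cos ((c + v) * x) ∂laplaceMeasure = cos (c * x) / (1 + x ^ 2) := by
  rw [integral_cos_const_add_mul_eq_re, charFun_eq,
    show (1 : ℂ) / (1 + x ^ 2) = ((1 / (1 + x ^ 2) : ℝ) : ℂ) by push_cast; rfl,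
    Complex.re_mul_ofReal, ← Complex.ofReal_mul, Complex.exp_ofReal_mul_I_re, mul_one_div]

end laplaceMeasure

end Laplace

section Spectral

variable {p : ℝ}

theorem oneSubCosIntegral_mul_laplace_abs_rpow_sub (hp : 0 < p) (hp2 : p < 2) (c : ℝ) :
    oneSubCosIntegral p * (∫ v, |c + v| ^ p ∂laplaceMeasure - |c| ^ p)
      = ∫ x in Set.Ioi (0 : ℝ), cos (c * x) * x ^ (1 - p) / (1 + x ^ 2) := by
  rw [oneSubCosIntegral_mul_integral_abs_rpow_sub hp hp2 (by fun_prop)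
    (laplaceMeasure.integrable_abs_const_add_rpow hp c)]
  refine setIntegral_congr_fun measurableSet_Ioi fun x (hx : 0 < x) => ?_
  simp only [laplaceMeasure.integral_cos_const_add_mul]
  rw [show 1 - p = 2 + (-1 - p) by ring, rpow_add hx, rpow_two]
  field_simp
  ring

theorem oneSubCosIntegral_eq (hp : 0 < p) (hp2 : p < 2) :
    oneSubCosIntegral p = π / (2 * sin (π * p / 2) * Gamma (p + 1)) := by
  have sin_reflect : sin (π * ((1 - p + 1) / 2)) = sin (π * p / 2) := by
    rw [← sin_pi_sub]
    ring_nf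
  have at_zero := oneSubCosIntegral_mul_laplace_abs_rpow_sub hp hp2 0
  simp only [zero_add, abs_zero, zero_rpow hp.ne', sub_zero, zero_mul, cos_zero, one_mul,
    laplaceMeasure.integral_abs_rpow (neg_one_lt_zero.trans hp), ← rpow_two] at at_zero
  rw [integral_rpow_div_one_add_rpow (by linarith) (by linarith), sin_reflect] at at_zero
  rw [← div_div, ← at_zero, mul_div_cancel_right₀ _ (Gamma_pos_of_pos (by linarith)).ne']

end Spectral

/-- Spectral representation of the covariance of the stationary fractional
Ornstein–Uhlenbeck process: for all `s ∈ ℝ`,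
`σ_ou²·(1/Γ(2H+1))·[(1/2)∫_ℝ e^{−|v|}|as+v|^{2H} dv − |as|^{2H}]
  = σ_ou²·(2 sin(πH)/π)·∫₀^∞ cos(asx)·x^{1−2H}/(1+x²) dx`. -/
theorem fou_covariance_spectral (H a σou2 : ℝ)
    (hH : H ∈ Set.Ioo (0:ℝ) 1) (ha : 0 < a) (hσ : 0 < σou2) (s : ℝ) :
    σou2 * (1 / Real.Gamma (2*H + 1)) *
      ((1/2) * (∫ v : ℝ, Real.exp (-|v|) * |a*s + v| ^ (2*H)) - |a*s| ^ (2*H))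
    = σou2 * (2 * Real.sin (Real.pi * H) / Real.pi) *
      ∫ x in Set.Ioi (0:ℝ), Real.cos (a*s*x) * x ^ (1 - 2*H) / (1 + x^2) := by
  obtain ⟨hH0, hH1⟩ := hH
  have hp : 0 < 2 * H := by linarith
  have hp2 : 2 * H < 2 := by linarith
  have sin_pi_mul_pos : 0 < sin (π * H) :=
    sin_pos_of_pos_of_lt_pi (by positivity) (mul_lt_of_lt_one_right pi_pos hH1)
  have constant : 1 / Gamma (2*H + 1) = 2 * sin (π * H) / π * oneSubCosIntegral (2*H) := by
    rw [oneSubCosIntegral_eq hp hp2, show π * (2*H) / 2 = π * H by ring,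
      div_mul_div_cancel₀ pi_ne_zero, div_mul_cancel_left₀ (by positivity), one_div]
  rw [laplaceMeasure.half_mul_integral_exp_neg_abs_mul,
    ← oneSubCosIntegral_mul_laplace_abs_rpow_sub hp hp2, constant]
  ring
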